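/- Let L ∈ ℝ^{N×N} satisfy the EEP condition with respect to a partition of the N nodes into k nonempty clusters with indicator matrix Q, and set B = (QᵀQ)^{-1} Qᵀ L Q. Then for every cluster index β and every node i, B_{c(i),β} = Σ_{j : c(j)=β} L_{i,j}; in particular this cluster-input sum depends only on the cluster c(i) of i. -/

import Mathlib

open Matrix BigOperators

/-!
The EEP condition says that the rows of `L Q` are constant on clusters, i.e. that `L Q = Q M` for
some matrix `M`: the span of the cluster indicators is invariant under `L`, and `M` is the matrix of
the restriction. Multiplying by the left inverse `(QᵀQ)⁻¹ Qᵀ` of `Q` gives `B = M`, so `Q B = L Q`.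
Row `i` of `Q B` is row `c i` of `B`, while row `i` of `L Q` lists the cluster-input sums of `i`.
-/

theorem inv_transpose_mul_self_mul_mul_of_mul_eq_mul {ι κ R : Type*} [Fintype ι] [Fintype κ]
    [DecidableEq κ] [CommRing R] {L : Matrix ι ι R} {Q : Matrix ι κ R} {M : Matrix κ κ R}
    (hQ : IsUnit (Qᵀ * Q)) (h : L * Q = Q * M) :
    (Qᵀ * Q)⁻¹ * Qᵀ * L * Q = M := by
  calc (Qᵀ * Q)⁻¹ * Qᵀ * L * Q
      = (Qᵀ * Q)⁻¹ * (Qᵀ * Q) * M := by simp only [Matrix.mul_assoc, h]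
    _ = M := by rw [nonsing_inv_mul _ ((isUnit_iff_isUnit_det _).mp hQ), Matrix.one_mul]

section ClusterIndicator

variable {ι κ R : Type*} [DecidableEq κ]

/-- The indicator matrix `Q` of the partition of `ι` into the fibers of `c`, which are the
clusters. As `c` need not be surjective, clusters may be empty: their columns are zero. -/
def clusterIndicator (R : Type*) [Zero R] [One R] (c : ι → κ) : Matrix ι κ R :=
  of fun j l => if c j = l then 1 else 0

/-- The EEP condition: the partition of `ι` into the fibers of `c` is an external equitable
partition for `L`. The target cluster `β` may be that of `i` and `j` itself; for a Laplacian matrix,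
whose rows sum to zero, the condition for this `β` follows from the others. -/
def IsExternallyEquitable [Fintype ι] [AddCommMonoid R] (c : ι → κ) (L : Matrix ι ι R) : Prop :=
  ∀ (β : κ) (i j : ι), c i = c j → ∑ p with c p = β, L i p = ∑ p with c p = β, L j p

/-- The quotient matrix `B = (QᵀQ)⁻¹ Qᵀ L Q` of `L` by the partition into the fibers of `c`. It is
the junk value `0` when the size of some cluster is not invertible in `R`. -/
noncomputable def quotientMatrix [Fintype ι] [Fintype κ] [CommRing R] (c : ι → κ)
    (L : Matrix ι ι R) : Matrix κ κ R :=
  ((clusterIndicator R c)ᵀ * clusterIndicator R c)⁻¹ * (clusterIndicator R c)ᵀ * L *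
    clusterIndicator R c

theorem mul_clusterIndicator_apply {μ : Type*} [Fintype ι] [NonAssocSemiring R] (c : ι → κ)
    (A : Matrix μ ι R) (i : μ) (l : κ) :
    (A * clusterIndicator R c) i l = ∑ j with c j = l, A i j := by
  simp [clusterIndicator, mul_apply, Finset.sum_filter]

theorem clusterIndicator_mul {ν : Type*} [Fintype κ] [NonAssocSemiring R] (c : ι → κ)
    (M : Matrix κ ν R) :
    clusterIndicator R c * M = M.submatrix c id := by
  ext i l
  simp [clusterIndicator, mul_apply]

theorem transpose_clusterIndicator_mul_self [Fintype ι] [NonAssocSemiring R] (c : ι → κ) :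
    (clusterIndicator R c)ᵀ * clusterIndicator R c =
      diagonal fun l => (({j | c j = l} : Finset ι).card : R) := by
  ext a b
  rw [mul_clusterIndicator_apply]
  obtain rfl | hab := eq_or_ne a b
  · simp [clusterIndicator, Finset.filter_filter]
  · rw [diagonal_apply_ne _ hab]
    refine Finset.sum_eq_zero fun j hj => if_neg fun hja => hab ?_
    exact hja.symm.trans (Finset.mem_filter.mp hj).2

theorem isUnit_transpose_clusterIndicator_mul_self_iff [Fintype ι] [Fintype κ] [CommRing R]
    {c : ι → κ} :
    IsUnit ((clusterIndicator R c)ᵀ * clusterIndicator R c) ↔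
      ∀ l, IsUnit (({j | c j = l} : Finset ι).card : R) := by
  rw [transpose_clusterIndicator_mul_self, isUnit_diagonal, Pi.isUnit_iff]

theorem isExternallyEquitable_iff_exists_mul_eq [Fintype ι] [Fintype κ] [NonAssocSemiring R]
    {c : ι → κ} {L : Matrix ι ι R} :
    IsExternallyEquitable c L ↔
      ∃ M : Matrix κ κ R, L * clusterIndicator R c = clusterIndicator R c * M := by
  calc IsExternallyEquitable c L
      ↔ Function.FactorsThrough (L * clusterIndicator R c) c := by
        simp only [IsExternallyEquitable, Function.FactorsThrough, funext_iff,
          mul_clusterIndicator_apply]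
        exact ⟨fun h i j hij β => h β i j hij, fun h β i j hij => h hij β⟩
    _ ↔ ∃ M : Matrix κ κ R, L * clusterIndicator R c = M.submatrix c id :=
        Function.factorsThrough_iff _
    _ ↔ ∃ M : Matrix κ κ R, L * clusterIndicator R c = clusterIndicator R c * M := by
        simp only [clusterIndicator_mul]

theorem clusterIndicator_mul_quotientMatrix [Fintype ι] [Fintype κ] [CommRing R] {c : ι → κ}
    (hc : ∀ l, IsUnit (({j | c j = l} : Finset ι).card : R)) {L : Matrix ι ι R}
    (hL : IsExternallyEquitable c L) :
    clusterIndicator R c * quotientMatrix c L = L * clusterIndicator R c := by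
  obtain ⟨M, hM⟩ := isExternallyEquitable_iff_exists_mul_eq.mp hL
  have hB : quotientMatrix c L = M :=
    inv_transpose_mul_self_mul_mul_of_mul_eq_mul
      (isUnit_transpose_clusterIndicator_mul_self_iff.mpr hc) hM
  rw [hB, hM]

theorem quotient_matrix_entries_are_cluster_input_sums_general [Fintype ι] [Fintype κ]
    [CommRing R] {c : ι → κ} (hc : ∀ l, IsUnit (({j | c j = l} : Finset ι).card : R))
    {L : Matrix ι ι R} (hL : IsExternallyEquitable c L) (β : κ) (i : ι) :
    quotientMatrix c L (c i) β = ∑ j with c j = β, L i j :=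
  calc quotientMatrix c L (c i) β
      = (clusterIndicator R c * quotientMatrix c L) i β := by
        rw [clusterIndicator_mul, submatrix_apply, id]
    _ = (L * clusterIndicator R c) i β := by rw [clusterIndicator_mul_quotientMatrix hc hL]
    _ = ∑ j with c j = β, L i j := mul_clusterIndicator_apply c L i β

theorem isUnit_card_fiber_of_surjective {K : Type*} [Fintype ι] [DivisionRing K] [CharZero K]
    {c : ι → κ} (hc : Function.Surjective c) (l : κ) :
    IsUnit (({j | c j = l} : Finset ι).card : K) := by
  obtain ⟨j, hj⟩ := hc l
  have hne : ({j | c j = l} : Finset ι).Nonempty :=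
    ⟨j, Finset.mem_filter.mpr ⟨Finset.mem_univ j, hj⟩⟩
  exact (Nat.cast_ne_zero.mpr hne.card_ne_zero).isUnit

end ClusterIndicator

/-- For `L` satisfying the EEP condition with indicator matrix `Q` and quotient
matrix `B = (QᵀQ)⁻¹ Qᵀ L Q`, the entry `B_{c(i),β}` equals the cluster-input sum
`∑_{j : c(j)=β} L_{i,j}`, which therefore depends on `i` only through its cluster `c(i)`. -/
theorem quotient_matrix_entries_are_cluster_input_sums
    {N k : ℕ} (c : Fin N → Fin k) (hc : Function.Surjective c)
    (L : Matrix (Fin N) (Fin N) ℝ)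
    (hEEP : ∀ (β : Fin k) (i j : Fin N), c i = c j →
      ∑ p ∈ Finset.univ.filter (fun p => c p = β), L i p =
      ∑ p ∈ Finset.univ.filter (fun p => c p = β), L j p)
    (Q : Matrix (Fin N) (Fin k) ℝ)
    (hQ : ∀ j l, Q j l = if c j = l then 1 else 0)
    (B : Matrix (Fin k) (Fin k) ℝ)
    (hB : B = (Qᵀ * Q)⁻¹ * Qᵀ * L * Q) :
    ∀ (β : Fin k) (i : Fin N),
      B (c i) β = ∑ j ∈ Finset.univ.filter (fun j => c j = β), L i j := by
  obtain rfl : Q = clusterIndicator ℝ c := by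
    ext j l
    exact hQ j l
  subst hB
  exact quotient_matrix_entries_are_cluster_input_sums_general
    (isUnit_card_fiber_of_surjective hc) hEEP
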